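/- arXiv:2505.17868 — 2 statements merged into one kernel-verified Lean document; each statement's English description precedes it below -/
import Mathlib

section
/- Let k ≤ h and L be positive integers, let ε ≥ 0 and λ ≥ 0. Let Φ ∈ ℝ^{k×L} be a matrix, let α_1,…,α_h ∈ ℝ, and let μ ∈ ℝ^{h×L} be the matrix whose i-th row is μ_L(α_i). Let M ∈ ℝ^{h×k} be a matrix whose i-th row m_i satisfies ‖m_iᵀΦ − μ_L(α_i)‖₂ ≤ ε for every i = 1,…,h, and suppose there exists N ∈ ℝ^{k×h} with N·M = I_k and operator norm ‖N‖ ≤ λ. Then ‖Φ − N·μ‖_F ≤ λ·h·ε. -/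
/-- The impulse vector `μ_L(α) ∈ ℝ^L`, `μ_L(α)_i = (1−α)·α^(i−1)` (0-indexed here). -/
noncomputable def impulse (L : ℕ) (α : ℝ) : Fin L → ℝ := fun i => (1 - α) * α ^ (i : ℕ)

/-- Euclidean norm of a vector in `ℝ^L`. -/
noncomputable def vecNorm {L : ℕ} (v : Fin L → ℝ) : ℝ := Real.sqrt (∑ j, (v j) ^ 2)

/-- Frobenius norm of a matrix. -/
noncomputable def froNorm {k L : ℕ} (A : Matrix (Fin k) (Fin L) ℝ) : ℝ :=
  Real.sqrt (∑ i, ∑ j, (A i j) ^ 2)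

/-- ℓ2→ℓ2 operator norm of a matrix. -/
noncomputable def opNorm {k h : ℕ} (N : Matrix (Fin k) (Fin h) ℝ) : ℝ :=
  ‖LinearMap.toContinuousLinearMap (Matrix.toEuclideanLin N)‖

/-!
Since `N * M = 1`, the error factors as `Φ - N * μ = N * (M * Φ - μ)`. Applying `N` column by column
multiplies the Frobenius norm by at most the operator norm of `N`, and the `h` rows of the residual
`M * Φ - μ`, each of length at most `ε`, contribute at most `√h * ε`, which is sharper than `h * ε`.
-/

open WithLp (toLp)

theorem sub_mul_eq_mul_sub_of_mul_eq_one {R l m n : Type*} [Ring R] [Fintype l] [Fintype m]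
    [DecidableEq l] {N : Matrix l m R} {M : Matrix m l R} (hNM : N * M = 1) (Φ : Matrix l n R)
    (μ : Matrix m n R) : Φ - N * μ = N * (M * Φ - μ) := by
  rw [Matrix.mul_sub, ← Matrix.mul_assoc, hNM, Matrix.one_mul]

section FrobeniusNorm

attribute [local instance] Matrix.frobeniusSeminormedAddCommGroup

variable {𝕜 α l m n : Type*} [RCLike 𝕜] [SeminormedAddCommGroup α] [Fintype l] [Fintype m]
  [Fintype n]

theorem frobenius_norm_sq_eq_sum_row (A : Matrix m n α) :
    ‖A‖ ^ 2 = ∑ i, ‖toLp 2 (A.row i)‖ ^ 2 :=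
  PiLp.norm_sq_eq_of_L2 _ (toLp 2 fun i => toLp 2 (A.row i))

theorem frobenius_norm_sq_eq_sum_col (A : Matrix m n α) :
    ‖A‖ ^ 2 = ∑ j, ‖toLp 2 (A.col j)‖ ^ 2 := by
  rw [← Matrix.frobenius_norm_transpose]
  exact frobenius_norm_sq_eq_sum_row A.transpose

theorem frobenius_norm_le_sqrt_card_mul {A : Matrix m n α} {r : ℝ}
    (hA : ∀ i, ‖toLp 2 (A.row i)‖ ≤ r) : ‖A‖ ≤ √(Fintype.card m) * r := by
  have hsq : ‖A‖ ^ 2 ≤ Fintype.card m * r ^ 2 := by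
    calc ‖A‖ ^ 2 = ∑ i, ‖toLp 2 (A.row i)‖ ^ 2 := frobenius_norm_sq_eq_sum_row A
      _ ≤ ∑ _i : m, r ^ 2 := by gcongr with i; exact hA i
      _ = Fintype.card m * r ^ 2 := by simp
  have hnonneg : 0 ≤ √(Fintype.card m) * r := by
    rcases isEmpty_or_nonempty m with _ | ⟨⟨i⟩⟩
    · simp
    · exact mul_nonneg (Real.sqrt_nonneg _) ((norm_nonneg _).trans (hA i))
  refine le_of_sq_le_sq ?_ hnonneg
  rwa [mul_pow, Real.sq_sqrt (Nat.cast_nonneg _)]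

theorem frobenius_norm_mul_le_opNorm_mul [DecidableEq m] (A : Matrix l m 𝕜) (B : Matrix m n 𝕜) :
    ‖A * B‖ ≤ ‖LinearMap.toContinuousLinearMap (Matrix.toEuclideanLin A)‖ * ‖B‖ := by
  set T := LinearMap.toContinuousLinearMap (Matrix.toEuclideanLin A)
  have hcol (j : n) : toLp 2 ((A * B).col j) = T (toLp 2 (B.col j)) := rfl
  refine le_of_sq_le_sq ?_ (by positivity)
  calc ‖A * B‖ ^ 2 = ∑ j, ‖T (toLp 2 (B.col j))‖ ^ 2 := by
        simp only [frobenius_norm_sq_eq_sum_col, hcol]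
    _ ≤ ∑ j, (‖T‖ * ‖toLp 2 (B.col j)‖) ^ 2 := by gcongr; exact T.le_opNorm _
    _ = (‖T‖ * ‖B‖) ^ 2 := by
        simp only [mul_pow, frobenius_norm_sq_eq_sum_col B, Finset.mul_sum]

theorem stmt0_general [DecidableEq l] [DecidableEq m] {ε lam : ℝ} {Φ : Matrix l n 𝕜}
    {μ : Matrix m n 𝕜} {M : Matrix m l 𝕜} (hM : ∀ i, ‖toLp 2 ((M * Φ - μ).row i)‖ ≤ ε)
    {N : Matrix l m 𝕜} (hNM : N * M = 1)
    (hN : ‖LinearMap.toContinuousLinearMap (Matrix.toEuclideanLin N)‖ ≤ lam) :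
    ‖Φ - N * μ‖ ≤ lam * √(Fintype.card m) * ε := by
  have hlam : 0 ≤ lam := (norm_nonneg _).trans hN
  rw [sub_mul_eq_mul_sub_of_mul_eq_one hNM]
  calc ‖N * (M * Φ - μ)‖
    _ ≤ ‖LinearMap.toContinuousLinearMap (Matrix.toEuclideanLin N)‖ * ‖M * Φ - μ‖ :=
        frobenius_norm_mul_le_opNorm_mul N _
    _ ≤ lam * (√(Fintype.card m) * ε) := by
        gcongr
        exact frobenius_norm_le_sqrt_card_mul hM
    _ = lam * √(Fintype.card m) * ε := (mul_assoc _ _ _).symm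

theorem vecNorm_eq_norm_toLp {L : ℕ} (v : Fin L → ℝ) : vecNorm v = ‖toLp 2 v‖ := by
  simp only [vecNorm, EuclideanSpace.norm_eq, Real.norm_eq_abs, sq_abs]

theorem froNorm_eq_norm {k L : ℕ} (A : Matrix (Fin k) (Fin L) ℝ) : froNorm A = ‖A‖ := by
  simp only [froNorm, Matrix.frobenius_norm_def, Real.sqrt_eq_rpow, Real.rpow_two,
    Real.norm_eq_abs, sq_abs]

end FrobeniusNorm

theorem sqrt_natCast_le_self (n : ℕ) : √(n : ℝ) ≤ n := by
  rw [Real.sqrt_le_self_iff]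
  exact_mod_cast n.eq_zero_or_pos

theorem stmt0 (k h L : ℕ) (hk : 0 < k) (hL : 0 < L) (hkh : k ≤ h)
    (ε lam : ℝ) (hε : 0 ≤ ε) (hlam : 0 ≤ lam)
    (Φ : Matrix (Fin k) (Fin L) ℝ) (α : Fin h → ℝ)
    (μ : Matrix (Fin h) (Fin L) ℝ) (hμ : ∀ i, μ i = impulse L (α i))
    (M : Matrix (Fin h) (Fin k) ℝ)
    (hM : ∀ i : Fin h, vecNorm (fun j => (M * Φ) i j - μ i j) ≤ ε)
    (N : Matrix (Fin k) (Fin h) ℝ) (hNM : N * M = 1) (hN : opNorm N ≤ lam) :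
    froNorm (Φ - N * μ) ≤ lam * h * ε := by
  have hrow (i : Fin h) : ‖toLp 2 ((M * Φ - μ).row i)‖ ≤ ε :=
    (vecNorm_eq_norm_toLp _).symm.trans_le (hM i)
  rw [froNorm_eq_norm]
  refine (stmt0_general hrow hNM hN).trans ?_
  rw [Fintype.card_fin]
  gcongr
  exact sqrt_natCast_le_self h
end

section
/- Let L be a positive integer and let P ∈ ℝ^{L×L} be an orthogonal projection (i.e., P = Pᵀ and P² = P). Then ∫_0^1 ‖μ_L(α) − P·μ_L(α)‖₂² dα = tr((I_L − P)·Z_L). -/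
/-- The Hankel matrix `Z_L` with entries `(Z_L)_{ij} = 2/((i+j)^3 − (i+j))` (1-indexed). -/
noncomputable def hankel (L : ℕ) : Matrix (Fin L) (Fin L) ℝ :=
  fun i j => 2 / ((((i : ℕ) + (j : ℕ) + 2 : ℕ) : ℝ) ^ 3 - (((i : ℕ) + (j : ℕ) + 2 : ℕ) : ℝ))

/-! The squared residual `‖(1 - P) v‖²` is `tr ((1 - P)ᵀ (1 - P) v vᵀ)`, and
`(1 - P)ᵀ (1 - P) = 1 - P` for an orthogonal projection. The trace is linear, so integrating over
`α` only replaces `v vᵀ` by the second-moment matrix of the impulse vectors; its entries are the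
Beta integrals `∫₀¹ α ^ (i + j) (1 - α) ^ 2 dα`, which are those of the Hankel matrix. -/

open Matrix MeasureTheory

theorem mulVec_dotProduct_mulVec_eq_trace {l m n R : Type*} [Fintype l] [Fintype m] [Fintype n]
    [CommSemiring R] (A : Matrix l m R) (B : Matrix l n R) (v : m → R) (w : n → R) :
    (A *ᵥ v) ⬝ᵥ (B *ᵥ w) = trace (Aᵀ * B * vecMulVec w v) := by
  rw [mul_vecMulVec, trace_vecMulVec, ← mulVec_mulVec, mulVec_transpose, ← dotProduct_mulVec,
    dotProduct_comm]

theorem integral_trace_mul {Ω m n 𝕜 : Type*} [MeasurableSpace Ω] {μ : Measure Ω} [Fintype m]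
    [Fintype n] [RCLike 𝕜] (A : Matrix m n 𝕜) {M : Ω → Matrix n m 𝕜}
    (hM : ∀ i j, Integrable (fun ω => M ω i j) μ) :
    ∫ ω, trace (A * M ω) ∂μ = trace (A * of fun i j => ∫ ω, M ω i j ∂μ) := by
  have hAM (i : m) (j : n) : Integrable (fun ω => A i j * M ω j i) μ := (hM j i).const_mul _
  simp only [trace, diag_apply, mul_apply, of_apply]
  rw [integral_finsetSum _ fun i _ => integrable_finsetSum _ fun j _ => hAM i j]
  refine Finset.sum_congr rfl fun i _ => ?_
  rw [integral_finsetSum _ fun j _ => hAM i j]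
  simp only [integral_const_mul]

theorem integral_pow_mul_one_sub_sq (n : ℕ) :
    ∫ x in (0 : ℝ)..1, x ^ n * (1 - x) ^ 2 = 2 / (((n : ℝ) + 1) * (n + 2) * (n + 3)) := by
  have expand (x : ℝ) : x ^ n * (1 - x) ^ 2 = x ^ n - 2 * x ^ (n + 1) + x ^ (n + 2) := by ring
  have moments : ∫ x in (0 : ℝ)..1, x ^ n * (1 - x) ^ 2 =
      1 / ((n : ℝ) + 1) - 2 * (1 / (n + 2)) + 1 / (n + 3) := by
    simp only [expand]
    rw [intervalIntegral.integral_add (Continuous.intervalIntegrable (by fun_prop) _ _)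
        (Continuous.intervalIntegrable (by fun_prop) _ _),
      intervalIntegral.integral_sub (Continuous.intervalIntegrable (by fun_prop) _ _)
        (Continuous.intervalIntegrable (by fun_prop) _ _),
      intervalIntegral.integral_const_mul]
    norm_num [integral_pow, add_assoc]
  rw [moments]
  field_simp
  ring

theorem continuous_impulse_apply {L : ℕ} (i : Fin L) : Continuous fun α => impulse L α i := by
  unfold impulse
  fun_prop

theorem integral_impulse_mul_impulse {L : ℕ} (i j : Fin L) :
    ∫ α in (0 : ℝ)..1, impulse L α i * impulse L α j = hankel L i j := by
  have product (α : ℝ) :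
      impulse L α i * impulse L α j = α ^ ((i : ℕ) + j) * (1 - α) ^ 2 := by
    simp only [impulse]
    ring
  simp only [product, integral_pow_mul_one_sub_sq, hankel]
  push_cast
  ring

theorem integral_mulVec_impulse_dotProduct {l : Type*} [Fintype l] {L : ℕ}
    (A B : Matrix l (Fin L) ℝ) :
    ∫ α in (0 : ℝ)..1, (A *ᵥ impulse L α) ⬝ᵥ (B *ᵥ impulse L α) =
      trace (Aᵀ * B * hankel L) := by
  have integrable (i j : Fin L) : IntegrableOn
      (fun α => vecMulVec (impulse L α) (impulse L α) i j) (Set.Ioc 0 1) :=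
    ((continuous_impulse_apply i).mul (continuous_impulse_apply j)).integrableOn_Ioc
  have second_moment :
      (of fun i j => ∫ α in Set.Ioc (0 : ℝ) 1, vecMulVec (impulse L α) (impulse L α) i j) =
        hankel L := by
    ext i j
    simp only [of_apply, vecMulVec_apply, ← integral_impulse_mul_impulse,
      intervalIntegral.integral_of_le zero_le_one]
  simp only [mulVec_dotProduct_mulVec_eq_trace]
  rw [intervalIntegral.integral_of_le zero_le_one, integral_trace_mul _ integrable, second_moment]

theorem transpose_one_sub_mul_one_sub {n R : Type*} [Fintype n] [DecidableEq n] [Ring R]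
    {P : Matrix n n R} (hsymm : P.IsSymm) (hidem : IsIdempotentElem P) :
    (1 - P)ᵀ * (1 - P) = 1 - P := by
  rw [transpose_sub, transpose_one, hsymm.eq, hidem.one_sub.eq]

open Matrix in
theorem stmt5 (L : ℕ) (hL : 0 < L) (P : Matrix (Fin L) (Fin L) ℝ)
    (hsymm : Pᵀ = P) (hidem : P * P = P) :
    (∫ α in (0:ℝ)..1, ∑ i, (impulse L α i - P.mulVec (impulse L α) i) ^ 2)
      = Matrix.trace ((1 - P) * hankel L) := by
  have residual (v : Fin L → ℝ) :
      ∑ i, (v i - (P *ᵥ v) i) ^ 2 = ((1 - P) *ᵥ v) ⬝ᵥ ((1 - P) *ᵥ v) := by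
    simp only [sub_mulVec, one_mulVec, dotProduct, Pi.sub_apply, sq]
  simp only [residual]
  rw [integral_mulVec_impulse_dotProduct, transpose_one_sub_mul_one_sub hsymm hidem]
end
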